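/- Let n ≥ 3, let Ω ⊆ ℂ be open, let φ₁,…,φₙ be smooth real-valued functions on Ω with φ₁+⋯+φₙ = 0, and let u: Ω → ℂ be smooth. Define the Conformal Affine Toda connection components A_z = ∂Φ + ℰ₊ + u·E_{n,1} and A_{z̄} = Σ_{i=1}^{n−1} e^{φᵢ−φᵢ₊₁} E_{i+1,i} + ū·e^{−(φ₁−φₙ)} E_{1,n}. Then the connection d + A_z dz + A_{z̄} dz̄ is flat if and only if ∂̄u = 0 and, for every i = 1,…,n, ∂∂̄φᵢ = e^{φᵢ−φᵢ₊₁} − e^{φᵢ₋₁−φᵢ} − |u|²·e^{−(φ₁−φₙ)}·(δ_{i,1} − δ_{i,n}) (the Conformal Affine Toda equations, with conventions e^{φ₀−φ₁} := 0 and e^{φₙ−φₙ₊₁} := 0). -/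

import Mathlib

open Complex Matrix

/-- Wirtinger derivative `∂f = ½(∂ₓf − i ∂_y f)`. -/
noncomputable def wd (f : ℂ → ℂ) (z : ℂ) : ℂ :=
  (1 / 2 : ℂ) * (fderiv ℝ f z 1 - Complex.I * fderiv ℝ f z Complex.I)

/-- Wirtinger derivative `∂̄f = ½(∂ₓf + i ∂_y f)`. -/
noncomputable def wdb (f : ℂ → ℂ) (z : ℂ) : ℂ :=
  (1 / 2 : ℂ) * (fderiv ℝ f z 1 + Complex.I * fderiv ℝ f z Complex.I)

/-- Entrywise Wirtinger derivative `∂A` of a matrix-valued function. -/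
noncomputable def mwd {n : ℕ} (A : ℂ → Matrix (Fin n) (Fin n) ℂ) (z : ℂ) :
    Matrix (Fin n) (Fin n) ℂ :=
  Matrix.of fun i j => wd (fun w => A w i j) z

/-- Entrywise Wirtinger derivative `∂̄A` of a matrix-valued function. -/
noncomputable def mwdb {n : ℕ} (A : ℂ → Matrix (Fin n) (Fin n) ℂ) (z : ℂ) :
    Matrix (Fin n) (Fin n) ℂ :=
  Matrix.of fun i j => wdb (fun w => A w i j) z

/-- Conformal Affine Toda `A_z = ∂Φ + ℰ₊ + u·E_{n,1}`. -/
noncomputable def catAz (n : ℕ) (hn : 3 ≤ n) (φ : Fin n → ℂ → ℝ) (u : ℂ → ℂ) (z : ℂ) :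
    Matrix (Fin n) (Fin n) ℂ :=
  Matrix.of fun i j =>
    if i = j then wd (fun w => ((φ i w : ℝ) : ℂ)) z
    else if (j : ℕ) = (i : ℕ) + 1 then 1
    else if (i : ℕ) = n - 1 ∧ (j : ℕ) = 0 then u z
    else 0

/-- Conformal Affine Toda
`A_{z̄} = Σ_{i=1}^{n−1} e^{φᵢ−φᵢ₊₁} E_{i+1,i} + ū·e^{−(φ₁−φₙ)} E_{1,n}`. -/
noncomputable def catAzb (n : ℕ) (hn : 3 ≤ n) (φ : Fin n → ℂ → ℝ) (u : ℂ → ℂ) (z : ℂ) :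
    Matrix (Fin n) (Fin n) ℂ :=
  Matrix.of fun i j =>
    if (i : ℕ) = (j : ℕ) + 1 then ((Real.exp (φ j z - φ i z) : ℝ) : ℂ)
    else if (i : ℕ) = 0 ∧ (j : ℕ) = n - 1 then
      (starRingEnd ℂ) (u z) *
        ((Real.exp (-(φ ⟨0, by omega⟩ z - φ ⟨n - 1, by omega⟩ z)) : ℝ) : ℂ)
    else 0

/-!
The matrices `A_z` and `A_{z̄}` are supported on the nodes of the extended Dynkin diagram of
`A_{n-1}`, an oriented cycle `i ↦ σ i`: `A_z = diag(∂φᵢ) + ∑ aᵢ E_{i,σ i}` and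
`A_{z̄} = ∑ āᵢ e^{φᵢ - φ_{σ i}} E_{σ i,i}`, where `aᵢ = 1` on the simple roots and `a = u` on the
affine one. When `σ` has no cycle of length at most `2`, that is when `n ≥ 3`,
the diagonal, the `E_{i,σ i}` and the `E_{σ i,i}` occupy disjoint positions, so the curvature
vanishes iff its three components do. The `E_{i,σ i}` component is `-∂̄aᵢ`; in the `E_{σ i,i}`
component the derivatives of the exponentials cancel against the commutator with `diag(∂φᵢ)` and
only a multiple of the conjugate of `∂̄aᵢ` is left; the diagonal component is the Toda equation.
-/

section Wirtinger

variable {f g : ℂ → ℂ} {z : ℂ}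

lemma wd_const (c z : ℂ) : wd (fun _ => c) z = 0 := by
  simp [wd]

lemma wdb_const (c z : ℂ) : wdb (fun _ => c) z = 0 := by
  simp [wdb]

lemma wd_conj (f : ℂ → ℂ) (z : ℂ) :
    wd (fun w => (starRingEnd ℂ) (f w)) z = (starRingEnd ℂ) (wdb f z) := by
  have h : fderiv ℝ (fun w => (starRingEnd ℂ) (f w)) z =
      (Complex.conjCLE : ℂ →L[ℝ] ℂ).comp (fderiv ℝ f z) :=
    Complex.conjCLE.comp_fderiv
  simp only [wd, wdb, h, ContinuousLinearMap.comp_apply, ContinuousLinearEquiv.coe_coe,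
    ContinuousAlgEquiv.coeCLE_apply, conjCAE_apply, one_div, map_mul, map_inv₀, conj_ofNat, map_add,
    conj_I]
  ring

lemma wd_sub (hf : DifferentiableAt ℝ f z) (hg : DifferentiableAt ℝ g z) :
    wd (fun w => f w - g w) z = wd f z - wd g z := by
  simp only [wd, fderiv_fun_sub hf hg, _root_.sub_apply]
  ring

lemma wd_mul (hf : DifferentiableAt ℝ f z) (hg : DifferentiableAt ℝ g z) :
    wd (fun w => f w * g w) z = wd f z * g z + f z * wd g z := by
  simp only [wd, fderiv_fun_mul hf hg, _root_.add_apply, _root_.smul_apply, smul_eq_mul]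
  ring

lemma wd_cexp (hf : DifferentiableAt ℝ f z) :
    wd (fun w => cexp (f w)) z = cexp (f z) * wd f z := by
  simp only [wd, hf.hasFDerivAt.cexp.fderiv, _root_.smul_apply, smul_eq_mul]
  ring

lemma wdb_wd_comm (hf : ContDiffAt ℝ 2 f z) : wdb (wd f) z = wd (wdb f) z := by
  have hsymm : fderiv ℝ (fderiv ℝ f) z 1 I = fderiv ℝ (fderiv ℝ f) z I 1 :=
    hf.isSymmSndFDerivAt (by simp) 1 I
  have hd : DifferentiableAt ℝ (fderiv ℝ f) z :=
    (hf.fderiv_right (m := 1) le_rfl).differentiableAt one_ne_zero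
  have hdir (v : ℂ) : HasFDerivAt (fun w => fderiv ℝ f w v)
      ((fderiv ℝ (fderiv ℝ f) z).flip v) z := by
    simpa using hd.hasFDerivAt.clm_apply (hasFDerivAt_const v z)
  have hwd : HasFDerivAt (wd f) _ z :=
    ((hdir 1).sub ((hdir I).const_mul I)).const_mul (1 / 2 : ℂ)
  have hwdb : HasFDerivAt (wdb f) _ z :=
    ((hdir 1).add ((hdir I).const_mul I)).const_mul (1 / 2 : ℂ)
  rw [wdb, wd, hwd.fderiv, hwdb.fderiv]
  simp only [_root_.smul_apply, _root_.sub_apply, _root_.add_apply,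
    ContinuousLinearMap.flip_apply, smul_eq_mul, hsymm]
  ring

end Wirtinger

section WeightedPermutation

variable {ι R : Type*} [DecidableEq ι]

/-- The matrix `∑ aᵢ E_{i,σ i}`. For `σ` the cyclic shift it collects the root vectors of the
simple roots and of minus the longest root; its transpose collects the opposite root vectors. -/
def weightedPermMatrix [Zero R] (σ : Equiv.Perm ι) (a : ι → R) : Matrix ι ι R :=
  Matrix.of fun i j => if σ i = j then a i else 0

lemma weightedPermMatrix_apply [Zero R] (σ : Equiv.Perm ι) (a : ι → R) (i j : ι) :
    weightedPermMatrix σ a i j = if σ i = j then a i else 0 :=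
  rfl

lemma diagonal_add_transpose_sub_weightedPermMatrix_eq_zero_iff [AddCommGroup R]
    {σ : Equiv.Perm ι} (hσ : ∀ i, σ (σ i) ≠ i) (d b a : ι → R) :
    diagonal d + (weightedPermMatrix σ b)ᵀ - weightedPermMatrix σ a = 0 ↔
      d = 0 ∧ b = 0 ∧ a = 0 := by
  have hfix (i : ι) : σ i ≠ i := fun h => hσ i (by rw [h, h])
  refine ⟨fun h => ?_, ?_⟩
  · have entry (i j : ι) := congrFun (congrFun h i) j
    simp only [Matrix.sub_apply, Matrix.add_apply, transpose_apply, weightedPermMatrix_apply,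
      Matrix.zero_apply] at entry
    refine ⟨funext fun i => ?_, funext fun i => ?_, funext fun i => ?_⟩
    · simpa [hfix] using entry i i
    · simpa [hfix, hσ] using entry (σ i) i
    · simpa [hσ, (hfix i).symm] using entry i (σ i)
  · rintro ⟨rfl, rfl, rfl⟩
    ext
    simp [weightedPermMatrix_apply]

variable [Fintype ι] (σ : Equiv.Perm ι)

lemma weightedPermMatrix_mul_transpose [NonUnitalNonAssocSemiring R] (a b : ι → R) :
    weightedPermMatrix σ a * (weightedPermMatrix σ b)ᵀ = diagonal fun i => a i * b i := by
  ext i j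
  rcases eq_or_ne i j with rfl | h
  · simp [Matrix.mul_apply, weightedPermMatrix_apply]
  · simp [Matrix.mul_apply, weightedPermMatrix_apply, h]

lemma transpose_mul_weightedPermMatrix [NonUnitalNonAssocSemiring R] (a b : ι → R) :
    (weightedPermMatrix σ b)ᵀ * weightedPermMatrix σ a =
      diagonal fun i => b (σ.symm i) * a (σ.symm i) := by
  ext i j
  rcases eq_or_ne i j with rfl | h
  · simp [Matrix.mul_apply, weightedPermMatrix_apply, ← Equiv.eq_symm_apply]
  · simp [Matrix.mul_apply, weightedPermMatrix_apply, ← Equiv.eq_symm_apply, h, h.symm]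

lemma diagonal_mul_transpose_sub_transpose_mul_diagonal [CommRing R] (d b : ι → R) :
    diagonal d * (weightedPermMatrix σ b)ᵀ - (weightedPermMatrix σ b)ᵀ * diagonal d =
      -(weightedPermMatrix σ fun i => (d i - d (σ i)) * b i)ᵀ := by
  ext i j
  by_cases h : σ j = i
  · subst h
    simp only [Matrix.sub_apply, Matrix.neg_apply, diagonal_mul, mul_diagonal, transpose_apply,
      weightedPermMatrix_apply, if_true]
    ring
  · simp [weightedPermMatrix_apply, h]

end WeightedPermutation

section Curvature

variable {n : ℕ} {σ : Equiv.Perm (Fin n)}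

/-- The curvature of the connection `d + A dz + B dz̄`, as the coefficient of `dz ∧ dz̄`. -/
noncomputable def curvature (A B : ℂ → Matrix (Fin n) (Fin n) ℂ) (z : ℂ) :
    Matrix (Fin n) (Fin n) ℂ :=
  mwd B z - mwdb A z + (A z * B z - B z * A z)

lemma mwd_transpose_weightedPermMatrix (b : Fin n → ℂ → ℂ) (z : ℂ) :
    mwd (fun w => (weightedPermMatrix σ (b · w))ᵀ) z =
      (weightedPermMatrix σ fun i => wd (b i) z)ᵀ := by
  ext i j
  by_cases h : σ j = i <;> simp [mwd, weightedPermMatrix_apply, h, wd_const]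

lemma mwdb_diagonal_add_weightedPermMatrix (hσ : ∀ i, σ i ≠ i) (d a : Fin n → ℂ → ℂ) (z : ℂ) :
    mwdb (fun w => diagonal (d · w) + weightedPermMatrix σ (a · w)) z =
      diagonal (fun i => wdb (d i) z) + weightedPermMatrix σ fun i => wdb (a i) z := by
  ext i j
  by_cases hij : i = j
  · subst hij
    simp [mwdb, weightedPermMatrix_apply, hσ]
  · by_cases h : σ i = j <;> simp [mwdb, weightedPermMatrix_apply, hij, h, wdb_const]

lemma curvature_diagonal_add_weightedPermMatrix (hσ : ∀ i, σ i ≠ i) (d a b : Fin n → ℂ → ℂ)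
    (z : ℂ) :
    curvature (fun w => diagonal (d · w) + weightedPermMatrix σ (a · w))
        (fun w => (weightedPermMatrix σ (b · w))ᵀ) z =
      diagonal (fun i => a i z * b i z - a (σ.symm i) z * b (σ.symm i) z - wdb (d i) z) +
        (weightedPermMatrix σ fun i => wd (b i) z - (d i z - d (σ i) z) * b i z)ᵀ -
        weightedPermMatrix σ fun i => wdb (a i) z := by
  have hcartan := diagonal_mul_transpose_sub_transpose_mul_diagonal σ (d · z) (b · z)
  rw [curvature, mwd_transpose_weightedPermMatrix, mwdb_diagonal_add_weightedPermMatrix hσ,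
    add_mul, mul_add, weightedPermMatrix_mul_transpose, transpose_mul_weightedPermMatrix,
    add_sub_add_comm, hcartan]
  ext i j
  simp only [Matrix.add_apply, Matrix.sub_apply, Matrix.neg_apply, transpose_apply,
    diagonal_apply, weightedPermMatrix_apply]
  split_ifs <;> ring

end Curvature

section CyclicToda

variable {n : ℕ} {σ : Equiv.Perm (Fin n)} {a φ : Fin n → ℂ → ℂ} {z : ℂ}

/-- The component `A_z = diag(∂φᵢ) + ∑ aᵢ E_{i,σ i}` of the Toda connection on the oriented graph
of `σ`, with arbitrary weights `aᵢ` on the arrows `i → σ i`. -/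
noncomputable def todaAz (σ : Equiv.Perm (Fin n)) (a φ : Fin n → ℂ → ℂ) (z : ℂ) :
    Matrix (Fin n) (Fin n) ℂ :=
  diagonal (fun i => wd (φ i) z) + weightedPermMatrix σ (a · z)

/-- The coefficient `āᵢ e^{φᵢ - φ_{σ i}}` of `E_{σ i,i}` in the `A_{z̄}` of the Toda connection. -/
noncomputable def todaLowerWeight (σ : Equiv.Perm (Fin n)) (a φ : Fin n → ℂ → ℂ) (i : Fin n)
    (z : ℂ) : ℂ :=
  (starRingEnd ℂ) (a i z) * cexp (φ i z - φ (σ i) z)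

/-- The component `A_{z̄} = ∑ āᵢ e^{φᵢ - φ_{σ i}} E_{σ i,i}` of the Toda connection on the oriented
graph of `σ`. -/
noncomputable def todaAzb (σ : Equiv.Perm (Fin n)) (a φ : Fin n → ℂ → ℂ) (z : ℂ) :
    Matrix (Fin n) (Fin n) ℂ :=
  (weightedPermMatrix σ (todaLowerWeight σ a φ · z))ᵀ

/-- The interaction term `|aᵢ|² e^{φᵢ - φ_{σ i}}` that the arrow `i → σ i` contributes to the Toda
equations. -/
noncomputable def todaInteraction (σ : Equiv.Perm (Fin n)) (a φ : Fin n → ℂ → ℂ) (i : Fin n)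
    (z : ℂ) : ℂ :=
  normSq (a i z) * cexp (φ i z - φ (σ i) z)

lemma mul_todaLowerWeight (σ : Equiv.Perm (Fin n)) (a φ : Fin n → ℂ → ℂ) (i : Fin n) (z : ℂ) :
    a i z * todaLowerWeight σ a φ i z = todaInteraction σ a φ i z := by
  rw [todaLowerWeight, todaInteraction, ← mul_conj, mul_assoc]

lemma wd_todaLowerWeight {i : Fin n} (ha : DifferentiableAt ℝ (a i) z)
    (hφ : DifferentiableAt ℝ (φ i) z) (hφσ : DifferentiableAt ℝ (φ (σ i)) z) :
    wd (todaLowerWeight σ a φ i) z =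
      (starRingEnd ℂ) (wdb (a i) z) * cexp (φ i z - φ (σ i) z) +
        (wd (φ i) z - wd (φ (σ i)) z) * todaLowerWeight σ a φ i z := by
  have hconj : DifferentiableAt ℝ (fun w => (starRingEnd ℂ) (a i w)) z := ha.star
  have hsub : DifferentiableAt ℝ (fun w => φ i w - φ (σ i) w) z := hφ.sub hφσ
  calc wd (todaLowerWeight σ a φ i) z
      = wd (fun w => (starRingEnd ℂ) (a i w)) z * cexp (φ i z - φ (σ i) z) +
          (starRingEnd ℂ) (a i z) * wd (fun w => cexp (φ i w - φ (σ i) w)) z :=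
        wd_mul hconj hsub.cexp
    _ = _ := by
      rw [wd_conj, wd_cexp hsub, wd_sub hφ hφσ, todaLowerWeight]
      ring

theorem curvature_toda_eq_zero_iff (hσ : ∀ i, σ (σ i) ≠ i)
    (ha : ∀ i, DifferentiableAt ℝ (a i) z) (hφ : ∀ i, ContDiffAt ℝ 2 (φ i) z) :
    curvature (todaAz σ a φ) (todaAzb σ a φ) z = 0 ↔
      (∀ i, wdb (a i) z = 0) ∧ ∀ i, wd (wdb (φ i)) z =
        todaInteraction σ a φ i z - todaInteraction σ a φ (σ.symm i) z := by
  have hdφ (i : Fin n) : DifferentiableAt ℝ (φ i) z := (hφ i).differentiableAt two_ne_zero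
  have hfix (i : Fin n) : σ i ≠ i := fun h => hσ i (by rw [h, h])
  have hcurv := curvature_diagonal_add_weightedPermMatrix hfix (fun i => wd (φ i)) a
    (todaLowerWeight σ a φ) z
  simp only [wd_todaLowerWeight (ha _) (hdφ _) (hdφ _), add_sub_cancel_right,
    mul_todaLowerWeight, wdb_wd_comm (hφ _)] at hcurv
  change curvature (todaAz σ a φ) (todaAzb σ a φ) z = _ at hcurv
  rw [hcurv, diagonal_add_transpose_sub_weightedPermMatrix_eq_zero_iff hσ, and_comm]
  simp only [funext_iff, Pi.zero_apply, mul_eq_zero, exp_ne_zero, or_false, map_eq_zero,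
    and_self, sub_eq_zero, eq_comm (b := wd (wdb (φ _)) z)]

end CyclicToda

section CyclicShift

variable {n : ℕ}

lemma finRotate_val (i : Fin n) :
    (finRotate n i : ℕ) = if (i : ℕ) + 1 < n then (i : ℕ) + 1 else 0 := by
  cases n with
  | zero => exact i.elim0
  | succ m =>
    simp only [coe_finRotate, Fin.ext_iff, Fin.val_last]
    split_ifs <;> omega

lemma finRotate_finRotate_ne_self (hn : 3 ≤ n) (i : Fin n) :
    finRotate n (finRotate n i) ≠ i := by
  rw [ne_eq, Fin.ext_iff, finRotate_val, finRotate_val]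
  split_ifs <;> omega

lemma finRotate_eq_iff (i j : Fin n) :
    finRotate n i = j ↔ (j : ℕ) = i + 1 ∨ (i : ℕ) = n - 1 ∧ (j : ℕ) = 0 := by
  rw [Fin.ext_iff, finRotate_val]
  split_ifs <;> omega

lemma finRotate_of_succ_lt {i : Fin n} (h : (i : ℕ) + 1 < n) : finRotate n i = ⟨i + 1, h⟩ :=
  Fin.ext (by rw [finRotate_val, if_pos h])

lemma finRotate_of_not_succ_lt {i : Fin n} (h : ¬(i : ℕ) + 1 < n) : finRotate n i = ⟨0, i.pos⟩ :=
  Fin.ext (by rw [finRotate_val, if_neg h])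

end CyclicShift

section ConformalAffineToda

variable {n : ℕ} (φ : Fin n → ℂ → ℝ) (u : ℂ → ℂ)

/-- The coefficients of `ℰ₊ + u·E_{n,1}` along the cyclic shift: `1` on `E_{i,i+1}` and `u` on
`E_{n,1}`. -/
def catWeight (u : ℂ → ℂ) (i : Fin n) (z : ℂ) : ℂ :=
  if (i : ℕ) + 1 < n then 1 else u z

lemma catWeight_of_succ_lt {i : Fin n} (h : (i : ℕ) + 1 < n) : catWeight u i = fun _ => 1 :=
  funext fun _ => if_pos h

lemma catWeight_of_not_succ_lt {i : Fin n} (h : ¬(i : ℕ) + 1 < n) : catWeight u i = u :=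
  funext fun _ => if_neg h

lemma forall_wdb_catWeight_eq_zero_iff (hn : 0 < n) (z : ℂ) :
    (∀ i : Fin n, wdb (catWeight u i) z = 0) ↔ wdb u z = 0 := by
  refine ⟨fun h => ?_, fun h i => ?_⟩
  · have hlast : ¬((⟨n - 1, by omega⟩ : Fin n) : ℕ) + 1 < n := by simp only; omega
    exact catWeight_of_not_succ_lt u hlast ▸ h _
  · by_cases hi : (i : ℕ) + 1 < n
    · rw [catWeight_of_succ_lt u hi, wdb_const]
    · rw [catWeight_of_not_succ_lt u hi, h]

variable {u} in
lemma differentiableAt_catWeight {z : ℂ} (hu : DifferentiableAt ℝ u z) (i : Fin n) :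
    DifferentiableAt ℝ (catWeight u i) z := by
  unfold catWeight
  split_ifs <;> fun_prop

lemma catAz_eq_todaAz (hn : 3 ≤ n) :
    catAz n hn φ u = todaAz (finRotate n) (catWeight u) fun i w => (φ i w : ℂ) := by
  ext z i j
  simp only [catAz, todaAz, catWeight, Matrix.of_apply, Matrix.add_apply, diagonal_apply,
    weightedPermMatrix_apply, finRotate_eq_iff]
  split_ifs <;> first | omega | simp

lemma catAzb_eq_todaAzb (hn : 3 ≤ n) :
    catAzb n hn φ u = todaAzb (finRotate n) (catWeight u) fun i w => (φ i w : ℂ) := by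
  ext z i j
  simp only [catAzb, todaAzb, Matrix.of_apply, transpose_apply, weightedPermMatrix_apply,
    todaLowerWeight]
  by_cases hj : (j : ℕ) + 1 < n
  · rw [finRotate_of_succ_lt hj, catWeight_of_succ_lt u hj]
    by_cases hi : (i : ℕ) = j + 1
    · obtain rfl : i = ⟨j + 1, hj⟩ := Fin.ext hi
      simp
    · rw [if_neg hi, if_neg (by omega), if_neg (by simpa [Fin.ext_iff, eq_comm] using hi)]
  · have hlast : (⟨n - 1, by omega⟩ : Fin n) = j := Fin.ext (by simp only; omega)
    rw [finRotate_of_not_succ_lt hj, catWeight_of_not_succ_lt u hj, if_neg (by omega), hlast]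
    have hj' : (j : ℕ) = n - 1 := by omega
    simp [Fin.ext_iff, eq_comm, hj']

lemma todaInteraction_catWeight_of_succ_lt {i : Fin n} (h : (i : ℕ) + 1 < n) (z : ℂ) :
    todaInteraction (finRotate n) (catWeight u) (fun i w => (φ i w : ℂ)) i z =
      (Real.exp (φ i z - φ ⟨i + 1, h⟩ z) : ℝ) := by
  simp [todaInteraction, catWeight_of_succ_lt u h, finRotate_of_succ_lt h]

lemma todaInteraction_catWeight_of_not_succ_lt {i : Fin n} (h : ¬(i : ℕ) + 1 < n) (z : ℂ) :
    todaInteraction (finRotate n) (catWeight u) (fun i w => (φ i w : ℂ)) i z =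
      normSq (u z) * (Real.exp (-(φ ⟨0, i.pos⟩ z - φ ⟨n - 1, by omega⟩ z)) : ℝ) := by
  have hlast : (⟨n - 1, by omega⟩ : Fin n) = i := Fin.ext (by simp only; omega)
  simp [todaInteraction, catWeight_of_not_succ_lt u h, finRotate_of_not_succ_lt h, hlast]

lemma todaInteraction_catWeight (i : Fin n) (z : ℂ) :
    todaInteraction (finRotate n) (catWeight u) (fun i w => (φ i w : ℂ)) i z =
      (if h : (i : ℕ) + 1 < n then ((Real.exp (φ i z - φ ⟨i + 1, h⟩ z) : ℝ) : ℂ) else 0) +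
        normSq (u z) *
          (Real.exp (-(φ ⟨0, i.pos⟩ z - φ ⟨n - 1, Nat.sub_one_lt_of_lt i.isLt⟩ z)) : ℝ) *
          if (i : ℕ) = n - 1 then 1 else 0 := by
  by_cases h : (i : ℕ) + 1 < n
  · rw [todaInteraction_catWeight_of_succ_lt φ u h, dif_pos h, if_neg (by omega), mul_zero,
      add_zero]
  · rw [todaInteraction_catWeight_of_not_succ_lt φ u h, dif_neg h, if_pos (by omega), mul_one,
      zero_add]

lemma todaInteraction_catWeight_symm (i : Fin n) (z : ℂ) :
    todaInteraction (finRotate n) (catWeight u) (fun i w => (φ i w : ℂ))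
        ((finRotate n).symm i) z =
      (if 0 < (i : ℕ) then ((Real.exp (φ ⟨i - 1, by omega⟩ z - φ i z) : ℝ) : ℂ) else 0) +
        normSq (u z) *
          (Real.exp (-(φ ⟨0, i.pos⟩ z - φ ⟨n - 1, Nat.sub_one_lt_of_lt i.isLt⟩ z)) : ℝ) *
          if (i : ℕ) = 0 then 1 else 0 := by
  obtain ⟨j, rfl⟩ := (finRotate n).surjective i
  rw [Equiv.symm_apply_apply]
  by_cases h : (j : ℕ) + 1 < n
  · rw [todaInteraction_catWeight_of_succ_lt φ u h]
    simp [finRotate_of_succ_lt h]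
  · rw [todaInteraction_catWeight_of_not_succ_lt φ u h]
    simp [finRotate_of_not_succ_lt h]

theorem conformal_affine_toda_flatness_general (n : ℕ) (hn : 3 ≤ n) (φ : Fin n → ℂ → ℝ)
    (u : ℂ → ℂ) (z : ℂ) (hφ : ∀ i, ContDiffAt ℝ 2 (φ i) z) (hu : DifferentiableAt ℝ u z) :
    mwd (catAzb n hn φ u) z - mwdb (catAz n hn φ u) z +
        (catAz n hn φ u z * catAzb n hn φ u z - catAzb n hn φ u z * catAz n hn φ u z) = 0 ↔
      wdb u z = 0 ∧ ∀ i : Fin n,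
        wd (fun w => wdb (fun v => ((φ i v : ℝ) : ℂ)) w) z =
          (if h : (i : ℕ) + 1 < n then
              ((Real.exp (φ i z - φ ⟨(i : ℕ) + 1, h⟩ z) : ℝ) : ℂ)
            else 0) -
          (if 0 < (i : ℕ) then
              ((Real.exp
                  (φ ⟨(i : ℕ) - 1, lt_of_le_of_lt (Nat.sub_le _ _) i.isLt⟩ z - φ i z) : ℝ) : ℂ)
            else 0) -
          ((Complex.normSq (u z) : ℝ) : ℂ) *
            ((Real.exp (-(φ ⟨0, by omega⟩ z - φ ⟨n - 1, by omega⟩ z)) : ℝ) : ℂ) *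
            ((if (i : ℕ) = 0 then 1 else 0) - (if (i : ℕ) = n - 1 then 1 else 0)) := by
  have hφℂ (i : Fin n) : ContDiffAt ℝ 2 (fun w => (φ i w : ℂ)) z :=
    ofRealCLM.contDiff.contDiffAt.comp z (hφ i)
  have hcurv := curvature_toda_eq_zero_iff (finRotate_finRotate_ne_self hn)
    (differentiableAt_catWeight hu) hφℂ
  rw [← catAz_eq_todaAz φ u hn, ← catAzb_eq_todaAzb φ u hn,
    forall_wdb_catWeight_eq_zero_iff u (by omega)] at hcurv
  refine hcurv.trans (and_congr_right' (forall_congr' fun i => Eq.congr_right ?_))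
  rw [todaInteraction_catWeight, todaInteraction_catWeight_symm]
  ring

end ConformalAffineToda

/-- The Conformal Affine Toda connection `d + A_z dz + A_{z̄} dz̄` is flat if and only if
`∂̄u = 0` and the Conformal Affine Toda equations
`∂∂̄φᵢ = e^{φᵢ−φᵢ₊₁} − e^{φᵢ₋₁−φᵢ} − |u|²e^{−(φ₁−φₙ)}(δ_{i,1} − δ_{i,n})` hold. -/
theorem conformal_affine_toda_flatness (n : ℕ) (hn : 3 ≤ n) (Ω : Set ℂ) (hΩ : IsOpen Ω)
    (φ : Fin n → ℂ → ℝ) (hφ : ∀ i, ContDiffOn ℝ (⊤ : ℕ∞) (φ i) Ω)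
    (hsum : ∀ z ∈ Ω, ∑ i, φ i z = 0)
    (u : ℂ → ℂ) (hu : ContDiffOn ℝ (⊤ : ℕ∞) u Ω) :
    (∀ z ∈ Ω,
        mwd (catAzb n hn φ u) z - mwdb (catAz n hn φ u) z +
            (catAz n hn φ u z * catAzb n hn φ u z -
              catAzb n hn φ u z * catAz n hn φ u z) = 0) ↔
      ((∀ z ∈ Ω, wdb u z = 0) ∧
        (∀ z ∈ Ω, ∀ i : Fin n,
          wd (fun w => wdb (fun v => ((φ i v : ℝ) : ℂ)) w) z =
            (if h : (i : ℕ) + 1 < n then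
                ((Real.exp (φ i z - φ ⟨(i : ℕ) + 1, h⟩ z) : ℝ) : ℂ)
              else 0) -
            (if 0 < (i : ℕ) then
                ((Real.exp
                    (φ ⟨(i : ℕ) - 1, lt_of_le_of_lt (Nat.sub_le _ _) i.isLt⟩ z - φ i z) : ℝ) : ℂ)
              else 0) -
            ((Complex.normSq (u z) : ℝ) : ℂ) *
              ((Real.exp (-(φ ⟨0, by omega⟩ z - φ ⟨n - 1, by omega⟩ z)) : ℝ) : ℂ) *
              ((if (i : ℕ) = 0 then 1 else 0) - (if (i : ℕ) = n - 1 then 1 else 0)))) := by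
  rw [← forall₂_and]
  exact forall₂_congr fun z hz => conformal_affine_toda_flatness_general n hn φ u z
    (fun i => ((hφ i).contDiffAt (hΩ.mem_nhds hz)).of_le (WithTop.coe_le_coe.2 le_top))
    ((hu.contDiffAt (hΩ.mem_nhds hz)).differentiableAt (by simp))
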